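/- For every p ∈ [2, ∞] there exists C > 0 such that for every n ≥ 1, ‖e_n‖_{L^p(Θ)} ≤ C δ_p(n) and ‖e_n′‖_{L^p(Θ)} ≤ C δ_p(n) ‖e_n′‖_{L²(Θ)}, where δ_p(n) = 1 if 2 ≤ p < 4, δ_p(n) = (log(1+n))^{1/4} if p = 4, and δ_p(n) = n^{1/2 − 2/p} if p > 4 (so δ_∞(n) = n^{1/2}). -/

import Mathlib

open MeasureTheory
open scoped ENNReal

/-- The Bessel function of order zero, defined by its power series. -/
noncomputable def J0 (x : ℝ) : ℝ :=
  ∑' j : ℕ, ((-1 : ℝ) ^ j / ((Nat.factorial j : ℝ)) ^ 2) * (x / 2) ^ (2 * j)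

/-- The measure on `(0,1)` with density `2π r`, so that integrals with respect to it are
integrals over the unit disc `Θ` of radial functions. -/
noncomputable def muTheta : Measure ℝ :=
  (volume.restrict (Set.Ioo (0 : ℝ) 1)).withDensity fun r => ENNReal.ofReal (2 * Real.pi * r)

/-- The `L²(Θ)` norm of `J₀(z_n ·)`. -/
noncomputable def besselL2 (z : ℕ → ℝ) (n : ℕ) : ℝ :=
  Real.sqrt (2 * Real.pi * ∫ r in (0 : ℝ)..1, (J0 (z n * r)) ^ 2 * r)

/-- The normalized Dirichlet eigenfunction `e_n(r) = J₀(z_n r)/‖J₀(z_n ·)‖_{L²(Θ)}`. -/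
noncomputable def efun (z : ℕ → ℝ) (n : ℕ) (r : ℝ) : ℝ :=
  J0 (z n * r) / besselL2 z n

/-- The radial derivative `e_n′(r) = z_n J₀′(z_n r)/‖J₀(z_n ·)‖_{L²(Θ)}`. -/
noncomputable def efun' (z : ℕ → ℝ) (n : ℕ) (r : ℝ) : ℝ :=
  z n * deriv J0 (z n * r) / besselL2 z n

/-- The loss factor `δ_p(n)`. -/
noncomputable def deltaLp (p : ℝ≥0∞) (n : ℕ) : ℝ :=
  if p < 4 then 1
  else if p = 4 then (Real.log (1 + (n : ℝ))) ^ ((1 : ℝ) / 4)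
  else (n : ℝ) ^ ((1 : ℝ) / 2 - 2 / p.toReal)

/-- Auxiliary series `∑ t^j / (j! (j+k)!)`. -/
noncomputable def FS (k : ℕ) (t : ℝ) : ℝ :=
  ∑' j : ℕ, t ^ j / ((Nat.factorial j : ℝ) * (Nat.factorial (j + k) : ℝ))

lemma FS_summable (k : ℕ) (t : ℝ) :
    Summable fun j : ℕ => t ^ j / ((Nat.factorial j : ℝ) * (Nat.factorial (j + k) : ℝ)) := by
  refine Summable.of_norm_bounded (Real.summable_pow_div_factorial |t|) ?_
  intro j
  rw [norm_div, norm_pow, Real.norm_eq_abs, Real.norm_of_nonneg (by positivity)]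
  have h1 : (1 : ℝ) ≤ (Nat.factorial (j + k) : ℝ) := by
    exact_mod_cast Nat.factorial_pos (j + k)
  have h2 : (0 : ℝ) < (Nat.factorial j : ℝ) := by positivity
  apply div_le_div_of_nonneg_left (by positivity) h2
  nlinarith

lemma FS_hasDerivAt (k : ℕ) (t : ℝ) : HasDerivAt (FS k) (FS (k + 1) t) t := by
  have hR : 0 < |t| + 1 := by positivity
  have key : HasDerivAt (fun s : ℝ => ∑' j : ℕ, s ^ j / ((Nat.factorial j : ℝ) * (Nat.factorial (j + k) : ℝ)))
      (∑' j : ℕ, ((j : ℝ) * t ^ (j - 1)) / ((Nat.factorial j : ℝ) * (Nat.factorial (j + k) : ℝ))) t := by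
    refine hasDerivAt_tsum_of_isPreconnected
      (u := fun j : ℕ => ((j : ℝ) * (|t| + 1) ^ (j - 1)) / (Nat.factorial j : ℝ))
      (t := Metric.ball (0 : ℝ) (|t| + 1)) ?_ Metric.isOpen_ball
      (convex_ball _ _).isPreconnected (g := fun (j : ℕ) (s : ℝ) => s ^ j / ((Nat.factorial j : ℝ) * (Nat.factorial (j + k) : ℝ)))
      (g' := fun (j : ℕ) (s : ℝ) => ((j : ℝ) * s ^ (j - 1)) / ((Nat.factorial j : ℝ) * (Nat.factorial (j + k) : ℝ)))
      ?_ ?_ (y₀ := t) ?_ (FS_summable k t) ?_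
    · rw [← summable_nat_add_iff 1]
      refine (Real.summable_pow_div_factorial (|t| + 1)).congr ?_
      intro j
      have : (Nat.factorial j : ℝ) ≠ 0 := by positivity
      rw [Nat.factorial_succ]
      push_cast
      field_simp
    · intro j y _
      exact (hasDerivAt_pow j y).div_const _
    · intro j y hy
      rw [mem_ball_zero_iff] at hy
      have h1 : (1 : ℝ) ≤ (Nat.factorial (j + k) : ℝ) := by
        exact_mod_cast Nat.factorial_pos (j + k)
      have h2 : (0 : ℝ) < (Nat.factorial j : ℝ) := by positivity
      rw [norm_div, norm_mul, norm_pow, Real.norm_of_nonneg (by positivity : (0:ℝ) ≤ (Nat.factorial j : ℝ) * (Nat.factorial (j + k) : ℝ)), Real.norm_of_nonneg (by positivity : (0:ℝ) ≤ (j:ℝ))]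
      apply div_le_div₀ (by positivity) _ h2 (by nlinarith)
      gcongr
    · rw [mem_ball_zero_iff, Real.norm_eq_abs]; linarith
    · rw [mem_ball_zero_iff, Real.norm_eq_abs]; linarith
  have hs : FS (k + 1) t = (∑' j : ℕ, ((j : ℝ) * t ^ (j - 1)) / ((Nat.factorial j : ℝ) * (Nat.factorial (j + k) : ℝ))) := by
    have e : ∀ j : ℕ, (((j + 1 : ℕ) : ℝ) * t ^ (j + 1 - 1)) / ((Nat.factorial (j + 1) : ℝ) * (Nat.factorial (j + 1 + k) : ℝ)) = t ^ j / ((Nat.factorial j : ℝ) * (Nat.factorial (j + (k + 1)) : ℝ)) := by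
      intro j
      have h1 : (Nat.factorial j : ℝ) ≠ 0 := by positivity
      have h2 : (Nat.factorial (j + (k + 1)) : ℝ) ≠ 0 := by positivity
      rw [show j + 1 + k = j + (k + 1) by ring, Nat.factorial_succ j]
      simp only [Nat.add_sub_cancel]
      push_cast
      field_simp
    have hsum : Summable (fun j : ℕ => ((j : ℝ) * t ^ (j - 1)) / ((Nat.factorial j : ℝ) * (Nat.factorial (j + k) : ℝ))) := by
      rw [← summable_nat_add_iff 1]
      exact (FS_summable (k + 1) t).congr fun j => (e j).symm
    rw [hsum.tsum_eq_zero_add]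
    simp only [e]
    simp [FS]
  rw [hs]
  exact key

lemma FS_rec (t : ℝ) : t * FS 2 t + FS 1 t = FS 0 t := by
  have h0 := (FS_summable 0 t).hasSum
  have h1 := (FS_summable 1 t).hasSum
  have h2 := ((FS_summable 2 t).hasSum).mul_left t
  have h3 : HasSum (fun j : ℕ => (j : ℝ) * t ^ j / ((Nat.factorial j : ℝ) * (Nat.factorial (j + 1) : ℝ))) (t * FS 2 t) := by
    rw [← hasSum_nat_add_iff' 1]
    simp only [Finset.range_one, Finset.sum_singleton, Nat.cast_zero, zero_mul, zero_div, sub_zero]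
    rw [FS]
    refine Eq.mpr (congrArg (fun f : ℕ → ℝ => HasSum f _) (funext fun j => ?_)) h2
    have h1 : (Nat.factorial j : ℝ) ≠ 0 := by positivity
    have h2 : (Nat.factorial (j + 2) : ℝ) ≠ 0 := by positivity
    rw [show j + 1 + 1 = j + 2 by ring, Nat.factorial_succ j]
    push_cast
    field_simp
    ring
  have h4 := h3.add h1
  refine h4.unique ?_
  rw [FS]
  refine Eq.mpr (congrArg (fun f : ℕ → ℝ => HasSum f _) (funext fun j => ?_)) h0
  have h1 : (Nat.factorial j : ℝ) ≠ 0 := by positivity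
  rw [Nat.add_zero, Nat.factorial_succ j]
  push_cast
  field_simp
  ring

/-- The function `J₀'`. -/
noncomputable def K0 (x : ℝ) : ℝ := -(x / 2) * FS 1 (-(x ^ 2 / 4))

lemma J0_eq (x : ℝ) : J0 x = FS 0 (-(x ^ 2 / 4)) := by
  unfold J0 FS
  congr 1
  ext j
  rw [Nat.add_zero, neg_pow (x ^ 2 / 4), pow_mul, show (x / 2) ^ 2 = x ^ 2 / 4 by ring, ← sq]
  generalize (x ^ 2 / 4) ^ j = u
  ring

lemma J0_hasDerivAt (x : ℝ) : HasDerivAt J0 (K0 x) x := by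
  have hin : HasDerivAt (fun x : ℝ => -(x ^ 2 / 4)) (-(x / 2)) x := by
    have := ((hasDerivAt_pow 2 x).div_const 4).neg
    refine this.congr_deriv ?_
    norm_num; ring
  have := (FS_hasDerivAt 0 (-(x ^ 2 / 4))).comp x hin
  rw [show J0 = FS 0 ∘ (fun x : ℝ => -(x ^ 2 / 4)) from funext J0_eq]
  refine this.congr_deriv ?_
  unfold K0; ring_nf

lemma K0_hasDerivAt (x : ℝ) (hx : x ≠ 0) : HasDerivAt K0 (-J0 x - K0 x / x) x := by
  have hin : HasDerivAt (fun x : ℝ => -(x ^ 2 / 4)) (-(x / 2)) x := by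
    have := ((hasDerivAt_pow 2 x).div_const 4).neg
    refine this.congr_deriv ?_
    norm_num; ring
  have h1 := (FS_hasDerivAt 1 (-(x ^ 2 / 4))).comp x hin
  have h2 := (((hasDerivAt_id x).div_const 2).neg).mul h1
  refine h2.congr_deriv ?_
  have h3 := FS_rec (-(x ^ 2 / 4))
  rw [J0_eq, ← h3]
  simp only [K0, id, Function.comp]
  field_simp
  norm_num
  ring

lemma J0_continuous : Continuous J0 :=
  continuous_iff_continuousAt.2 fun x => (J0_hasDerivAt x).continuousAt

lemma K0_continuous : Continuous K0 := by
  have : Continuous (FS 1) := continuous_iff_continuousAt.2 fun x => (FS_hasDerivAt 1 x).continuousAt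
  unfold K0
  fun_prop

lemma J0_zero : J0 0 = 1 := by
  rw [J0_eq, FS, tsum_eq_single 0]
  · simp
  · intro j hj
    simp [hj]

lemma K0_zero : K0 0 = 0 := by simp [K0]

lemma deriv_J0 : deriv J0 = K0 := funext fun x => (J0_hasDerivAt x).deriv
lemma JK_le_one (x : ℝ) (hx : 0 ≤ x) : J0 x ^ 2 + K0 x ^ 2 ≤ 1 := by
  have h : AntitoneOn (fun x => J0 x ^ 2 + K0 x ^ 2) (Set.Ici 0) := by
    apply antitoneOn_of_hasDerivWithinAt_nonpos (convex_Ici 0)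
      (f' := fun x => -2 * K0 x ^ 2 / x)
    · have := J0_continuous
      have := K0_continuous
      fun_prop
    · intro y hy
      rw [interior_Ici, Set.mem_Ioi] at hy
      apply HasDerivAt.hasDerivWithinAt
      have := ((J0_hasDerivAt y).pow 2).add ((K0_hasDerivAt y hy.ne').pow 2)
      refine this.congr_deriv ?_
      field_simp
      norm_num
      ring
    · intro y hy
      rw [interior_Ici, Set.mem_Ioi] at hy
      apply div_nonpos_of_nonpos_of_nonneg _ hy.le
      nlinarith [sq_nonneg (K0 y)]
  have := h (Set.self_mem_Ici) (Set.mem_Ici.2 hx) hx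
  simpa [J0_zero, K0_zero] using this

lemma J0_lower (x : ℝ) (hx : 0 ≤ x) : 1 - x ≤ J0 x := by
  have h : MonotoneOn (fun x => J0 x + x) (Set.Ici 0) := by
    apply monotoneOn_of_hasDerivWithinAt_nonneg (convex_Ici 0)
      (f' := fun x => K0 x + 1)
    · have := J0_continuous
      fun_prop
    · intro y hy
      exact ((J0_hasDerivAt y).add (hasDerivAt_id y)).hasDerivWithinAt
    · intro y hy
      rw [interior_Ici, Set.mem_Ioi] at hy
      have := JK_le_one y hy.le
      nlinarith [sq_nonneg (J0 y)]
  have := h (Set.self_mem_Ici) (Set.mem_Ici.2 hx) hx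
  simp [J0_zero] at this
  linarith

/-- The energy of `√x J₀`. -/
noncomputable def En (x : ℝ) : ℝ :=
  x * (J0 x ^ 2 + K0 x ^ 2) + J0 x * K0 x + J0 x ^ 2 / (2 * x)

lemma En_hasDerivAt (x : ℝ) (hx : x ≠ 0) : HasDerivAt En (-(J0 x ^ 2 / (2 * x ^ 2))) x := by
  have hJ := J0_hasDerivAt x
  have hK := K0_hasDerivAt x hx
  have := (((hasDerivAt_id x).mul ((hJ.pow 2).add (hK.pow 2))).add (hJ.mul hK)).add
    ((hJ.pow 2).div ((hasDerivAt_id x).const_mul 2) (by simpa using hx))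
  refine this.congr_deriv ?_
  simp
  field_simp
  ring

lemma En_ge (x : ℝ) (hx : 0 < x) : x * J0 x ^ 2 + x / 2 * K0 x ^ 2 ≤ En x := by
  have : En x = x * J0 x ^ 2 + x / 2 * K0 x ^ 2 + x / 2 * (K0 x + J0 x / x) ^ 2 := by
    unfold En
    field_simp
    ring
  rw [this]
  have : 0 ≤ x / 2 * (K0 x + J0 x / x) ^ 2 := by positivity
  linarith

lemma En_anti : AntitoneOn En (Set.Ioi 0) := by
  apply antitoneOn_of_hasDerivWithinAt_nonpos (convex_Ioi 0)
    (f' := fun x => -(J0 x ^ 2 / (2 * x ^ 2)))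
  · intro y hy
    exact (En_hasDerivAt y (ne_of_gt hy)).continuousAt.continuousWithinAt
  · intro y hy
    rw [interior_Ioi, Set.mem_Ioi] at hy
    exact (En_hasDerivAt y hy.ne').hasDerivWithinAt
  · intro y _
    have : 0 ≤ J0 y ^ 2 / (2 * y ^ 2) := by positivity
    linarith

lemma En_lower : ∃ c : ℝ, 0 < c ∧ ∀ x : ℝ, 1 / 2 ≤ x → c ≤ En x := by
  have h : MonotoneOn (fun x => En x * Real.exp (-(1 / (4 * x ^ 2)))) (Set.Ioi 0) := by
    have hd : ∀ x : ℝ, 0 < x → HasDerivAt (fun x => En x * Real.exp (-(1 / (4 * x ^ 2))))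
      ((-(J0 x ^ 2 / (2 * x ^ 2))) * Real.exp (-(1 / (4 * x ^ 2))) + En x * (Real.exp (-(1 / (4 * x ^ 2))) * (1 / (2 * x ^ 3)))) x := by
      intro x hx
      refine (En_hasDerivAt x hx.ne').mul (HasDerivAt.exp ?_)
      have h1 : HasDerivAt (fun x : ℝ => 4 * x ^ 2) (4 * (2 * x)) x := by
        simpa using (hasDerivAt_pow 2 x).const_mul 4
      have h2 := ((hasDerivAt_const x (1:ℝ)).div h1 (by positivity)).neg
      refine h2.congr_deriv ?_
      field_simp
      norm_num
    apply monotoneOn_of_hasDerivWithinAt_nonneg (convex_Ioi 0)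
      (f' := fun x => (-(J0 x ^ 2 / (2 * x ^ 2))) * Real.exp (-(1 / (4 * x ^ 2))) + En x * (Real.exp (-(1 / (4 * x ^ 2))) * (1 / (2 * x ^ 3))))
    · intro y hy
      exact (hd y hy).continuousAt.continuousWithinAt
    · intro y hy
      rw [interior_Ioi, Set.mem_Ioi] at hy
      exact (hd y hy).hasDerivWithinAt
    · intro y hy
      rw [interior_Ioi, Set.mem_Ioi] at hy
      have h1 := En_ge y hy
      have h3 : y * J0 y ^ 2 ≤ En y := by nlinarith [sq_nonneg (K0 y)]
      have h4 : J0 y ^ 2 / (2 * y ^ 2) ≤ En y * (1 / (2 * y ^ 3)) := by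
        rw [mul_one_div, div_le_div_iff₀ (by positivity) (by positivity)]
        have : 0 < 2 * y ^ 2 := by positivity
        nlinarith
      have h5 := Real.exp_pos (-(1 / (4 * y ^ 2)))
      nlinarith
  have hE : 0 < En (1 / 2) := by
    have h1 := En_ge (1 / 2) (by norm_num)
    have h2 := J0_lower (1 / 2) (by norm_num)
    nlinarith [sq_nonneg (K0 (1 / 2))]
  refine ⟨En (1 / 2) * Real.exp (-(1 / (4 * (1 / 2) ^ 2))), by positivity, ?_⟩
  intro x hx
  have hx0 : 0 < x := by linarith
  have h1 := h (Set.mem_Ioi.2 (by norm_num : (0:ℝ) < 1 / 2)) (Set.mem_Ioi.2 hx0) hx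
  refine h1.trans ?_
  have h2 : 0 ≤ En x := by
    have := En_ge x hx0
    have : 0 ≤ x * J0 x ^ 2 + x / 2 * K0 x ^ 2 := by positivity
    linarith
  apply mul_le_of_le_one_right h2
  rw [Real.exp_le_one_iff]
  have : 0 ≤ 1 / (4 * x ^ 2) := by positivity
  linarith

lemma JK_decay (x : ℝ) (hx : 0 ≤ x) : J0 x ^ 2 ≤ 8 / (1 + x) ∧ K0 x ^ 2 ≤ 8 / (1 + x) := by
  have h1 := JK_le_one x hx
  have hJ := sq_nonneg (J0 x)
  have hK := sq_nonneg (K0 x)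
  rcases le_total x 1 with h | h
  · have : 1 ≤ 8 / (1 + x) := by
      rw [le_div_iff₀ (by linarith)]; linarith
    constructor <;> linarith
  · have hx0 : 0 < x := by linarith
    have h2 := En_ge x hx0
    have h3 := En_anti (Set.mem_Ioi.2 one_pos) (Set.mem_Ioi.2 hx0) h
    have h4 : En 1 ≤ 2 := by
      unfold En
      have := JK_le_one 1 zero_le_one
      nlinarith [sq_nonneg (J0 1 - K0 1), sq_nonneg (K0 1), sq_nonneg (J0 1)]
    constructor <;> rw [le_div_iff₀ (by linarith)] <;> nlinarith

lemma exists_zero (a : ℝ) (ha : 0 < a) : ∃ x ∈ Set.Icc a (a + Real.pi), J0 x = 0 := by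
  by_contra hno
  push Not at hno
  have hpi := Real.pi_pos
  -- sign of J0 is constant
  have hsign : (∀ x ∈ Set.Icc a (a + Real.pi), 0 < J0 x) ∨ (∀ x ∈ Set.Icc a (a + Real.pi), J0 x < 0) := by
    by_contra hcon
    push Not at hcon
    obtain ⟨⟨x, hx, hx1⟩, ⟨y, hy, hy1⟩⟩ := hcon
    have := (isPreconnected_Icc (a := a) (b := a + Real.pi)).intermediate_value hx hy J0_continuous.continuousOn
    obtain ⟨w, hw, hw1⟩ := this ⟨hx1, hy1⟩
    exact hno w hw hw1
  have hd : ∀ x : ℝ, 0 < x → HasDerivAt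
      (fun x => (Real.sqrt x * K0 x + J0 x / (2 * Real.sqrt x)) * Real.sin (x - a)
        - Real.sqrt x * J0 x * Real.cos (x - a))
      (-(J0 x * Real.sin (x - a) / (4 * x * Real.sqrt x))) x := by
    intro x hx
    have hs := Real.hasDerivAt_sqrt hx.ne'
    have hJ := J0_hasDerivAt x
    have hK := K0_hasDerivAt x hx.ne'
    have hsp := Real.sqrt_pos.2 hx
    have hsin : HasDerivAt (fun x => Real.sin (x - a)) (Real.cos (x - a)) x := by
      simpa using ((hasDerivAt_id x).sub_const a).sin
    have hcos : HasDerivAt (fun x => Real.cos (x - a)) (-Real.sin (x - a)) x := by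
      simpa using ((hasDerivAt_id x).sub_const a).cos
    have := (((hs.mul hK).add (hJ.div (hs.const_mul 2) (by positivity))).mul hsin).sub
      ((hs.mul hJ).mul hcos)
    refine this.congr_deriv ?_
    simp only [Pi.mul_apply, Pi.add_apply, Pi.div_apply]
    obtain ⟨s, hs0, rfl⟩ : ∃ s : ℝ, 0 < s ∧ x = s ^ 2 := ⟨Real.sqrt x, hsp, (Real.sq_sqrt hx.le).symm⟩
    rw [Real.sqrt_sq hs0.le]
    field_simp
    ring
  have hcont : ContinuousOn (fun x => (Real.sqrt x * K0 x + J0 x / (2 * Real.sqrt x)) * Real.sin (x - a)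
        - Real.sqrt x * J0 x * Real.cos (x - a)) (Set.Icc a (a + Real.pi)) := fun y hy =>
    (hd y (by linarith [hy.1])).continuousAt.continuousWithinAt
  have hae : a ∈ Set.Icc a (a + Real.pi) := ⟨le_rfl, by linarith⟩
  have hbe : a + Real.pi ∈ Set.Icc a (a + Real.pi) := ⟨by linarith, le_rfl⟩
  have hsa : 0 < Real.sqrt a := Real.sqrt_pos.2 ha
  have hsb : 0 < Real.sqrt (a + Real.pi) := Real.sqrt_pos.2 (by linarith)
  rcases hsign with h | h
  · have hm : AntitoneOn (fun x => (Real.sqrt x * K0 x + J0 x / (2 * Real.sqrt x)) * Real.sin (x - a)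
        - Real.sqrt x * J0 x * Real.cos (x - a)) (Set.Icc a (a + Real.pi)) := by
      apply antitoneOn_of_hasDerivWithinAt_nonpos (convex_Icc _ _) hcont
      · intro y hy
        rw [interior_Icc] at hy
        exact (hd y (by linarith [hy.1])).hasDerivWithinAt
      · intro y hy
        rw [interior_Icc] at hy
        have h1 := h y ⟨hy.1.le, hy.2.le⟩
        have h2 := Real.sin_nonneg_of_nonneg_of_le_pi (x := y - a) (by linarith [hy.1]) (by linarith [hy.2])
        have h3 : 0 < y := by linarith [hy.1]
        rw [neg_nonpos]
        positivity
    have := hm hae hbe (by linarith)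
    simp at this
    have h1 := mul_pos hsa (h a hae)
    have h2 := mul_pos hsb (h _ hbe)
    linarith
  · have hm : MonotoneOn (fun x => (Real.sqrt x * K0 x + J0 x / (2 * Real.sqrt x)) * Real.sin (x - a)
        - Real.sqrt x * J0 x * Real.cos (x - a)) (Set.Icc a (a + Real.pi)) := by
      apply monotoneOn_of_hasDerivWithinAt_nonneg (convex_Icc _ _) hcont
      · intro y hy
        rw [interior_Icc] at hy
        exact (hd y (by linarith [hy.1])).hasDerivWithinAt
      · intro y hy
        rw [interior_Icc] at hy
        have h1 := h y ⟨hy.1.le, hy.2.le⟩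
        have h2 := Real.sin_nonneg_of_nonneg_of_le_pi (x := y - a) (by linarith [hy.1]) (by linarith [hy.2])
        have h3 : 0 < y := by linarith [hy.1]
        rw [← neg_div, ← neg_mul]
        have h4 : 0 ≤ -J0 y := by linarith
        positivity
    have := hm hae hbe (by linarith)
    simp at this
    have h1 := mul_pos hsa (neg_pos.2 (h a hae))
    have h2 := mul_pos hsb (neg_pos.2 (h _ hbe))
    linarith

lemma J0_sq_integral (w : ℝ) (hw : 0 < w) (h0 : J0 w = 0) :
    ∫ r in (0 : ℝ)..1, (J0 (w * r)) ^ 2 * r = K0 w ^ 2 / 2 := by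
  have hJc := J0_continuous
  have hKc := K0_continuous
  rw [intervalIntegral.integral_eq_sub_of_hasDeriv_right_of_le zero_le_one
    (f := fun r => r ^ 2 / 2 * (J0 (w * r) ^ 2 + K0 (w * r) ^ 2))]
  · simp [h0]; ring
  · fun_prop
  · intro r hr
    have hr0 : 0 < r := hr.1
    have hl : HasDerivAt (fun r : ℝ => w * r) w r := by simpa using (hasDerivAt_id r).const_mul w
    have hJ := (J0_hasDerivAt (w * r)).comp r hl
    have hK := (K0_hasDerivAt (w * r) (by positivity)).comp r hl
    have := ((hasDerivAt_pow 2 r).div_const 2).mul ((hJ.pow 2).add (hK.pow 2))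
    refine (this.congr_deriv ?_).hasDerivWithinAt
    simp
    field_simp
    ring
  · apply Continuous.intervalIntegrable
    fun_prop

lemma K0_sq_integral (w : ℝ) (hw : 0 < w) (h0 : J0 w = 0) :
    ∫ r in (0 : ℝ)..1, (K0 (w * r)) ^ 2 * r = K0 w ^ 2 / 2 := by
  have hJc := J0_continuous
  have hKc := K0_continuous
  rw [intervalIntegral.integral_eq_sub_of_hasDeriv_right_of_le zero_le_one
    (f := fun r => r ^ 2 / 2 * (J0 (w * r) ^ 2 + K0 (w * r) ^ 2) + r / w * (J0 (w * r) * K0 (w * r)))]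
  · simp [h0]; ring
  · fun_prop
  · intro r hr
    have hr0 : 0 < r := hr.1
    have hl : HasDerivAt (fun r : ℝ => w * r) w r := by simpa using (hasDerivAt_id r).const_mul w
    have hJ := (J0_hasDerivAt (w * r)).comp r hl
    have hK := (K0_hasDerivAt (w * r) (by positivity)).comp r hl
    have := (((hasDerivAt_pow 2 r).div_const 2).mul ((hJ.pow 2).add (hK.pow 2))).add
      (((hasDerivAt_id r).div_const w).mul (hJ.mul hK))
    refine (this.congr_deriv ?_).hasDerivWithinAt
    simp
    field_simp
    ring
  · apply Continuous.intervalIntegrable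
    fun_prop
lemma lintegral_muTheta_le (F : ℝ → ℝ≥0∞) (h : ℝ → ℝ) (hc : ContinuousOn h (Set.Icc 0 1))
    (hb : ∀ r ∈ Set.Ioo (0 : ℝ) 1, F r * ENNReal.ofReal (2 * Real.pi * r) ≤ ENNReal.ofReal (h r))
    (h0 : ∀ r ∈ Set.Ioo (0 : ℝ) 1, 0 ≤ h r) :
    ∫⁻ r, F r ∂muTheta ≤ ENNReal.ofReal (∫ r in (0 : ℝ)..1, h r) := by
  have hm : Measurable fun r : ℝ => ENNReal.ofReal (2 * Real.pi * r) := by fun_prop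
  unfold muTheta
  rw [lintegral_withDensity_eq_lintegral_mul_non_measurable _ hm
    (Filter.Eventually.of_forall fun x => ENNReal.ofReal_lt_top),
    intervalIntegral.integral_of_le zero_le_one, integral_Ioc_eq_integral_Ioo,
    ofReal_integral_eq_lintegral_ofReal]
  · apply setLIntegral_mono' measurableSet_Ioo
    intro r hr
    simp only [Pi.mul_apply]
    rw [mul_comm]
    exact hb r hr
  · exact (hc.integrableOn_Icc).mono_set Set.Ioo_subset_Icc_self
  · filter_upwards [ae_restrict_mem measurableSet_Ioo] with r hr
    exact h0 r hr

lemma lintegral_muTheta_eq (h : ℝ → ℝ) (hc : Continuous h) (h0 : ∀ r, 0 ≤ h r) :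
    ∫⁻ r, ENNReal.ofReal (h r) ∂muTheta = ENNReal.ofReal (2 * Real.pi * ∫ r in (0 : ℝ)..1, h r * r) := by
  have hm : Measurable fun r : ℝ => ENNReal.ofReal (2 * Real.pi * r) := by fun_prop
  unfold muTheta
  rw [lintegral_withDensity_eq_lintegral_mul_non_measurable _ hm
    (Filter.Eventually.of_forall fun x => ENNReal.ofReal_lt_top),
    ← intervalIntegral.integral_const_mul,
    intervalIntegral.integral_of_le zero_le_one, integral_Ioc_eq_integral_Ioo,
    ofReal_integral_eq_lintegral_ofReal]
  · apply setLIntegral_congr_fun measurableSet_Ioo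
    intro r hr
    have hr0 : 0 < r := hr.1
    simp only [Pi.mul_apply]
    rw [← ENNReal.ofReal_mul (by positivity)]
    congr 1; ring
  · have : Continuous fun r => 2 * Real.pi * (h r * r) := by fun_prop
    exact (this.continuousOn.integrableOn_Icc).mono_set Set.Ioo_subset_Icc_self
  · filter_upwards [ae_restrict_mem measurableSet_Ioo] with r hr
    have hr0 : 0 < r := hr.1
    have := h0 r
    simp only [Pi.zero_apply]
    positivity

lemma int_rpow (Z s : ℝ) (hZ : 1 ≤ Z) (hs : s ≠ -1) :
    ∫ r in (0 : ℝ)..1, (1 + Z * r) ^ s = Z⁻¹ * (((1 + Z) ^ (s + 1) - 1) / (s + 1)) := by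
  rw [intervalIntegral.integral_comp_add_mul (fun x => x ^ s) (by positivity : Z ≠ 0), integral_rpow]
  · simp
  · right
    refine ⟨hs, ?_⟩
    rw [Set.uIcc_of_le (by linarith)]
    simp

lemma int_inv (Z : ℝ) (hZ : 1 ≤ Z) :
    ∫ r in (0 : ℝ)..1, (1 + Z * r) ^ (-1 : ℝ) = Z⁻¹ * Real.log (1 + Z) := by
  simp only [Real.rpow_neg_one]
  rw [intervalIntegral.integral_comp_add_mul (fun x => x⁻¹) (by positivity : Z ≠ 0), integral_inv_of_pos]
  · simp
  · simp
  · linarith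

/-- Real estimate behind the `L^p` bounds. -/
lemma real_est (q D : ℝ) (hq : 2 ≤ q) (hD : 0 < D) : ∃ K : ℝ, 0 < K ∧ ∀ n : ℕ, 1 ≤ n → ∀ Z : ℝ, 1 ≤ Z →
    Z ≤ 5 * n → (2 * Real.pi * (D * Z) ^ (q / 2) * Z⁻¹) * ∫ r in (0 : ℝ)..1, (1 + Z * r) ^ (1 - q / 2)
      ≤ K * (deltaLp (ENNReal.ofReal q) n) ^ q := by
  have hpi := Real.pi_pos
  have h4 : (4 : ℝ≥0∞) = ENNReal.ofReal 4 := by simp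
  rcases lt_trichotomy q 4 with h | h | h
  · have hlt : ENNReal.ofReal q < 4 := by
      rw [h4]; exact (ENNReal.ofReal_lt_ofReal_iff (by norm_num)).2 h
    have ha : 0 < 2 - q / 2 := by linarith
    refine ⟨2 * Real.pi * D ^ (q / 2) * (2 ^ (2 - q / 2) / (2 - q / 2)), by positivity, ?_⟩
    intro n hn Z hZ _
    have hZ0 : 0 < Z := by linarith
    simp only [deltaLp, hlt, if_true, Real.one_rpow, mul_one]
    rw [int_rpow Z _ hZ (by linarith), show 1 - q / 2 + 1 = 2 - q / 2 by ring, Real.mul_rpow hD.le hZ0.le]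
    have h1 : ((1 + Z) ^ (2 - q / 2) - 1) / (2 - q / 2) ≤ (2 ^ (2 - q / 2) * Z ^ (2 - q / 2)) / (2 - q / 2) := by
      gcongr
      rw [← Real.mul_rpow (by norm_num) hZ0.le]
      have : (1 + Z) ^ (2 - q / 2) ≤ (2 * Z) ^ (2 - q / 2) := by
        gcongr
        linarith
      linarith
    have h2 : Z ^ (q / 2) * Z ^ (2 - q / 2) = Z ^ 2 := by
      rw [← Real.rpow_add hZ0, ← Real.rpow_natCast]; congr 1; push_cast; ring
    calc _ ≤ 2 * Real.pi * (D ^ (q / 2) * Z ^ (q / 2)) * Z⁻¹ * (Z⁻¹ * ((2 ^ (2 - q / 2) * Z ^ (2 - q / 2)) / (2 - q / 2))) := by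
          gcongr
      _ = 2 * Real.pi * D ^ (q / 2) * Z⁻¹ * Z⁻¹ * (2 ^ (2 - q / 2) / (2 - q / 2)) * (Z ^ (q / 2) * Z ^ (2 - q / 2)) := by ring
      _ = _ := by rw [h2]; field_simp
  · subst h
    refine ⟨2 * Real.pi * D ^ 2 * 5, by positivity, ?_⟩
    intro n hn Z hZ hZn
    have hZ0 : 0 < Z := by linarith
    have hn1 : (1 : ℝ) ≤ n := by exact_mod_cast hn
    have hl0 : 0 ≤ Real.log (1 + n) := Real.log_nonneg (by linarith)
    rw [← h4]
    simp only [deltaLp, lt_irrefl, if_false, if_true]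
    rw [show (1 - (4:ℝ) / 2) = -1 by norm_num, int_inv Z hZ, ← Real.rpow_mul hl0,
      show ((4:ℝ) / 2) = ((2 : ℕ) : ℝ) by norm_num, Real.rpow_natCast]
    norm_num
    have h1 : Real.log (1 + Z) ≤ 5 * Real.log (1 + n) := by
      rw [show (5 : ℝ) = ((5 : ℕ) : ℝ) by norm_num, ← Real.log_pow]
      apply Real.log_le_log (by linarith)
      have := one_add_mul_le_pow (a := (n : ℝ)) (by linarith) 5
      push_cast at this
      linarith
    calc _ = 2 * Real.pi * D ^ 2 * Real.log (1 + Z) := by field_simp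
      _ ≤ 2 * Real.pi * D ^ 2 * (5 * Real.log (1 + n)) := by gcongr
      _ = _ := by ring
  · have hlt : 4 < ENNReal.ofReal q := by
      rw [h4]; exact (ENNReal.ofReal_lt_ofReal_iff (by linarith)).2 h
    have ha : 0 < q / 2 - 2 := by linarith
    refine ⟨2 * Real.pi * D ^ (q / 2) * (5 ^ (q / 2 - 2) / (q / 2 - 2)), by positivity, ?_⟩
    intro n hn Z hZ hZn
    have hZ0 : 0 < Z := by linarith
    simp only [deltaLp, not_lt.2 hlt.le, hlt.ne', if_false]
    rw [ENNReal.toReal_ofReal (by linarith), ← Real.rpow_mul (by positivity),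
      show (1 / 2 - 2 / q) * q = q / 2 - 2 by field_simp]
    rw [int_rpow Z _ hZ (by linarith), show 1 - q / 2 + 1 = -(q / 2 - 2) by ring, Real.mul_rpow hD.le hZ0.le]
    have h1 : ((1 + Z) ^ (-(q / 2 - 2)) - 1) / (-(q / 2 - 2)) ≤ 1 / (q / 2 - 2) := by
      rw [div_neg, ← neg_div]
      gcongr
      have : 0 ≤ (1 + Z) ^ (-(q / 2 - 2)) := by positivity
      linarith
    have h2 : Z ^ (q / 2) = Z ^ 2 * Z ^ (q / 2 - 2) := by
      rw [← Real.rpow_natCast, ← Real.rpow_add hZ0]; congr 1; push_cast; ring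
    calc _ ≤ 2 * Real.pi * (D ^ (q / 2) * Z ^ (q / 2)) * Z⁻¹ * (Z⁻¹ * (1 / (q / 2 - 2))) := by
          gcongr
      _ = 2 * Real.pi * D ^ (q / 2) * (1 / (q / 2 - 2)) * Z ^ (q / 2 - 2) := by rw [h2]; field_simp
      _ ≤ 2 * Real.pi * D ^ (q / 2) * (1 / (q / 2 - 2)) * (5 * n) ^ (q / 2 - 2) := by gcongr
      _ = _ := by rw [Real.mul_rpow (by norm_num) (by positivity)]; ring

lemma deltaLp_nonneg (p : ℝ≥0∞) (n : ℕ) : 0 ≤ deltaLp p n := by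
  unfold deltaLp
  split_ifs
  · norm_num
  · exact Real.rpow_nonneg (Real.log_nonneg (by linarith [(Nat.cast_nonneg n : (0:ℝ) ≤ n)])) _
  · positivity

lemma key_bound (p : ℝ≥0∞) (hp : 2 ≤ p) (D : ℝ) (hD : 0 < D) : ∃ C : ℝ, 0 < C ∧ ∀ n : ℕ, 1 ≤ n →
    ∀ Z : ℝ, 1 ≤ Z → Z ≤ 5 * n → ∀ f : ℝ → ℝ,
    (∀ r ∈ Set.Ioo (0 : ℝ) 1, f r ^ 2 ≤ D * Z / (1 + Z * r)) →
    eLpNorm f p muTheta ≤ ENNReal.ofReal (C * deltaLp p n) := by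
  have hpi := Real.pi_pos
  by_cases htop : p = ⊤
  · subst htop
    refine ⟨Real.sqrt (5 * D), by positivity, ?_⟩
    intro n hn Z hZ hZn f hf
    rw [eLpNorm_exponent_top]
    apply eLpNormEssSup_le_of_ae_bound
    have : ∀ᵐ r ∂muTheta, r ∈ Set.Ioo (0 : ℝ) 1 := by
      unfold muTheta
      exact (withDensity_absolutelyContinuous _ _) (ae_restrict_mem measurableSet_Ioo)
    filter_upwards [this] with r hr
    have hd : deltaLp ⊤ n = Real.sqrt n := by
      simp [deltaLp, Real.sqrt_eq_rpow]
    rw [hd, ← Real.sqrt_mul (by positivity), Real.norm_eq_abs]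
    apply Real.abs_le_sqrt
    refine (hf r hr).trans ?_
    have hr0 := hr.1
    have h1 : 0 < 1 + Z * r := by positivity
    rw [div_le_iff₀ h1]
    have h2 : D * Z ≤ 5 * D * n := by nlinarith
    have h3 : 0 ≤ Z * r := by positivity
    have h4 : 0 < D * Z := by positivity
    nlinarith
  · obtain ⟨q, hq, rfl⟩ : ∃ q : ℝ, 2 ≤ q ∧ p = ENNReal.ofReal q := by
      refine ⟨p.toReal, ?_, (ENNReal.ofReal_toReal htop).symm⟩
      simpa using ENNReal.toReal_mono htop hp
    have hq0 : 0 < q := by linarith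
    obtain ⟨K, hK, hest⟩ := real_est q D hq hD
    refine ⟨K ^ (1 / q), by positivity, ?_⟩
    intro n hn Z hZ hZn f hf
    have hZ0 : 0 < Z := by linarith
    have hd := deltaLp_nonneg (ENNReal.ofReal q) n
    rw [eLpNorm_eq_lintegral_rpow_enorm_toReal (by simpa using hq0) htop, ENNReal.toReal_ofReal hq0.le]
    have h1 : ∫⁻ r, ‖f r‖ₑ ^ q ∂muTheta ≤ ENNReal.ofReal (K * (deltaLp (ENNReal.ofReal q) n) ^ q) := by
      refine le_trans ?_ (ENNReal.ofReal_le_ofReal (hest n hn Z hZ hZn))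
      rw [← intervalIntegral.integral_const_mul]
      apply lintegral_muTheta_le
      · apply ContinuousOn.mul continuousOn_const
        apply ContinuousOn.rpow_const (by fun_prop)
        intro r hr
        left
        have := hr.1
        positivity
      · intro r hr
        have hr0 : 0 < r := hr.1
        have hb : 0 < 1 + Z * r := by positivity
        rw [← ofReal_norm_eq_enorm, ENNReal.ofReal_rpow_of_nonneg (norm_nonneg _) hq0.le,
          ← ENNReal.ofReal_mul (by positivity)]
        apply ENNReal.ofReal_le_ofReal
        have e1 : ‖f r‖ ^ q ≤ (D * Z / (1 + Z * r)) ^ (q / 2) := by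
          have : ‖f r‖ ^ q = (f r ^ 2) ^ (q / 2) := by
            rw [Real.norm_eq_abs, ← sq_abs, ← Real.rpow_natCast, ← Real.rpow_mul (abs_nonneg _)]
            congr 1; push_cast; ring
          rw [this]
          exact Real.rpow_le_rpow (sq_nonneg _) (hf r hr) (by positivity)
        have e2 : r ≤ Z⁻¹ * (1 + Z * r) := by
          rw [mul_add, inv_mul_cancel_left₀ hZ0.ne']
          have : 0 ≤ Z⁻¹ * 1 := by positivity
          linarith
        calc ‖f r‖ ^ q * (2 * Real.pi * r) ≤ (D * Z / (1 + Z * r)) ^ (q / 2) * (2 * Real.pi * (Z⁻¹ * (1 + Z * r))) := by gcongr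
          _ = _ := by
            rw [Real.div_rpow (by positivity) hb.le, Real.rpow_sub hb, Real.rpow_one]
            ring
      · intro r hr
        have hr0 : 0 < r := hr.1
        positivity
    calc _ ≤ (ENNReal.ofReal (K * (deltaLp (ENNReal.ofReal q) n) ^ q)) ^ (1 / q) := by gcongr
      _ = _ := by
        rw [ENNReal.ofReal_rpow_of_nonneg (by positivity) (by positivity),
          Real.mul_rpow hK.le (by positivity), ← Real.rpow_mul hd]
        rw [mul_one_div_cancel hq0.ne', Real.rpow_one]

/-- `L^p(Θ)` bounds for the eigenfunctions `e_n` and their radial derivatives, for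
`p ∈ [2, ∞]` (with `p = ∞` corresponding to the essential supremum). -/
theorem eigenfunction_Lp_bounds
    (z : ℕ → ℝ)
    (hzpos : ∀ n, 1 ≤ n → 0 < z n)
    (hzmono : ∀ m n, 1 ≤ m → m < n → z m < z n)
    (hzzero : ∀ n, 1 ≤ n → J0 (z n) = 0)
    (hzall : ∀ x : ℝ, 0 < x → J0 x = 0 → ∃ n, 1 ≤ n ∧ z n = x) :
    ∀ p : ℝ≥0∞, 2 ≤ p → ∃ C : ℝ, 0 < C ∧ ∀ n : ℕ, 1 ≤ n →
      eLpNorm (efun z n) p muTheta ≤ ENNReal.ofReal (C * deltaLp p n) ∧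
      eLpNorm (efun' z n) p muTheta ≤
        ENNReal.ofReal (C * deltaLp p n) * eLpNorm (efun' z n) 2 muTheta := by
  have hpi := Real.pi_pos
  have hz1 : ∀ n, 1 ≤ n → 1 ≤ z n := by
    intro n hn
    have := J0_lower (z n) (hzpos n hn).le
    rw [hzzero n hn] at this
    linarith
  have hle : ∀ m n, 1 ≤ m → m ≤ n → z m ≤ z n := by
    intro m n hm hmn
    rcases hmn.eq_or_lt with h | h
    · rw [h]
    · exact (hzmono m n hm h).le
  have hpi4 := Real.pi_lt_four
  have hz5 : ∀ n : ℕ, 1 ≤ n → z n ≤ 5 * n := by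
    intro n hn
    induction n, hn using Nat.le_induction with
    | base =>
      obtain ⟨x, hx, hx0⟩ := exists_zero 1 one_pos
      obtain ⟨m, hm, hmx⟩ := hzall x (by linarith [hx.1]) hx0
      have := hle 1 m le_rfl hm
      have := hx.2
      push_cast
      linarith
    | succ n hn ih =>
      have hp := hzpos n hn
      obtain ⟨x, hx, hx0⟩ := exists_zero (z n + 1) (by linarith)
      obtain ⟨m, hm, hmx⟩ := hzall x (by linarith [hx.1]) hx0
      have hnm : n < m := by
        by_contra hcon
        have := hle m n hm (not_lt.1 hcon)
        have := hx.1
        linarith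
      have := hle (n + 1) m (by omega) hnm
      have := hx.2
      push_cast
      linarith
  obtain ⟨c, hc, hcE⟩ := En_lower
  have hKz : ∀ n, 1 ≤ n → c / z n ≤ K0 (z n) ^ 2 := by
    intro n hn
    have h1 := hcE (z n) (by linarith [hz1 n hn])
    have h2 := hzpos n hn
    rw [En, hzzero n hn] at h1
    rw [div_le_iff₀ h2]
    norm_num at h1
    linarith
  have hb2 : ∀ n, 1 ≤ n → besselL2 z n ^ 2 = Real.pi * K0 (z n) ^ 2 := by
    intro n hn
    rw [besselL2, J0_sq_integral _ (hzpos n hn) (hzzero n hn), Real.sq_sqrt (by positivity)]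
    ring
  have hb2c : ∀ n, 1 ≤ n → c / z n ≤ besselL2 z n ^ 2 := by
    intro n hn
    rw [hb2 n hn]
    have h1 := hKz n hn
    have h3 := Real.pi_gt_three
    nlinarith [sq_nonneg (K0 (z n))]
  intro p hp
  obtain ⟨C, hC, hkey⟩ := key_bound p hp (8 / c) (by positivity)
  refine ⟨C, hC, ?_⟩
  intro n hn
  have hzn := hzpos n hn
  have hB : 0 < besselL2 z n ^ 2 := lt_of_lt_of_le (by positivity) (hb2c n hn)
  have hB0 : besselL2 z n ≠ 0 := by
    intro h
    rw [h] at hB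
    norm_num at hB
  have hgen : ∀ g : ℝ → ℝ, (∀ x, 0 ≤ x → g x ^ 2 ≤ 8 / (1 + x)) →
      ∀ r ∈ Set.Ioo (0 : ℝ) 1, (g (z n * r) / besselL2 z n) ^ 2 ≤ 8 / c * z n / (1 + z n * r) := by
    intro g hg r hr
    have hr0 : 0 < r := hr.1
    have h1 := hg (z n * r) (by positivity)
    rw [div_pow]
    calc _ ≤ (8 / (1 + z n * r)) / (c / z n) :=
          div_le_div₀ (by positivity) h1 (by positivity) (hb2c n hn)
      _ = _ := by field_simp
  refine ⟨?_, ?_⟩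
  · exact hkey n hn (z n) (hz1 n hn) (hz5 n hn) _ (hgen J0 fun x hx => (JK_decay x hx).1)
  · have h1 := hkey n hn (z n) (hz1 n hn) (hz5 n hn) _ (hgen K0 fun x hx => (JK_decay x hx).2)
    have he : efun' z n = z n • (fun r => K0 (z n * r) / besselL2 z n) := by
      ext r
      simp only [efun', deriv_J0, Pi.smul_apply, smul_eq_mul]
      ring
    have h2 : eLpNorm (fun r => K0 (z n * r) / besselL2 z n) 2 muTheta = 1 := by
      rw [eLpNorm_eq_lintegral_rpow_enorm_toReal (by norm_num) (by norm_num)]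
      have e1 : ∀ r, ‖K0 (z n * r) / besselL2 z n‖ₑ ^ (2 : ℝ≥0∞).toReal
          = ENNReal.ofReal ((K0 (z n * r)) ^ 2 / besselL2 z n ^ 2) := by
        intro r
        rw [← ofReal_norm_eq_enorm, ENNReal.ofReal_rpow_of_nonneg (norm_nonneg _) (by norm_num)]
        congr 1
        rw [ENNReal.toReal_ofNat, Real.rpow_ofNat, Real.norm_eq_abs, sq_abs, div_pow]
      simp only [e1]
      have hKc := K0_continuous
      rw [lintegral_muTheta_eq _ (by fun_prop) (fun r => by positivity)]
      have e2 : 2 * Real.pi * ∫ r in (0 : ℝ)..1, K0 (z n * r) ^ 2 / besselL2 z n ^ 2 * r = 1 := by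
        have : ∀ r, K0 (z n * r) ^ 2 / besselL2 z n ^ 2 * r
          = (besselL2 z n ^ 2)⁻¹ * (K0 (z n * r) ^ 2 * r) := by intro r; ring
        simp only [this]
        rw [intervalIntegral.integral_const_mul, K0_sq_integral _ hzn (hzzero n hn)]
        have h5 := hb2 n hn
        field_simp
        linarith
      rw [e2]
      simp
    rw [he, eLpNorm_const_smul, eLpNorm_const_smul, h2, mul_one, mul_comm]
    gcongr
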